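/- Fix ρ ∈ (0,1) and α ∈ (0,1). Let (α_n) be a sequence in (0,1) with n·α_n → α, let c_n be defined by Φ(−c_n) = α_n, and for n ≥ 2 let z₀(n) be the unique real number with Φ(−d(ρ, c_n, z₀(n))) = 1/n. Then sup_{z ≤ z₀(n)} d(ρ,c_n,z)·G(ρ,c_n,z)²·φ(z) → 0 as n → ∞, where G(ρ,c,z) = (c + z/√ρ)/(2(1−ρ)^{3/2}). -/

import Mathlib

open MeasureTheory Filter

/-- The standard normal density. -/
noncomputable def phi (x : ℝ) : ℝ := (Real.sqrt (2 * Real.pi))⁻¹ * Real.exp (-x ^ 2 / 2)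

/-- The standard normal cumulative distribution function. -/
noncomputable def Phi (x : ℝ) : ℝ := ∫ t in Set.Iic x, phi t

/-- d(ρ,c,z) = (c + √ρ·z)/√(1−ρ). -/
noncomputable def dd (ρ c z : ℝ) : ℝ := (c + Real.sqrt ρ * z) / Real.sqrt (1 - ρ)

/-- G(ρ,c,z) = (c + z/√ρ)/(2(1−ρ)^{3/2}). -/
noncomputable def G (ρ c z : ℝ) : ℝ :=
  (c + z / Real.sqrt ρ) / (2 * (1 - ρ) ^ ((3 : ℝ) / 2))

/-- H_n(ρ,c) = ∫ Φ(d(ρ,c,z))^n φ(z) dz. -/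
noncomputable def Hn (n : ℕ) (ρ c : ℝ) : ℝ := ∫ z : ℝ, (Phi (dd ρ c z)) ^ n * phi z

lemma aux_phi_pos (x : ℝ) : 0 < phi x := by
  unfold phi; positivity

lemma aux_phi_int : Integrable phi := by
  have h := (integrable_exp_neg_mul_sq (b := 1/2) (by norm_num)).const_mul
    ((Real.sqrt (2 * Real.pi))⁻¹)
  refine h.congr (Eventually.of_forall fun x => ?_)
  simp only [phi]
  congr 2
  ring

lemma aux_Phi_mono : Monotone Phi := by
  intro x y hxy
  unfold Phi
  exact setIntegral_mono_set aux_phi_int.integrableOn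
    (Eventually.of_forall fun t => (aux_phi_pos t).le)
    (Set.Iic_subset_Iic.mpr hxy).eventuallyLE

lemma aux_Phi_pos (x : ℝ) : 0 < Phi x := by
  unfold Phi
  rw [setIntegral_pos_iff_support_of_nonneg_ae
    (Eventually.of_forall fun t => (aux_phi_pos t).le) aux_phi_int.integrableOn]
  have : Function.support phi = Set.univ := by
    ext t; simp [(aux_phi_pos t).ne']
  rw [this]
  simp

lemma aux_phi_bound (z : ℝ) (hz : z < 0) : |z| ^ 3 * phi z ≤ 8 / |z| := by
  have h0 : 0 < |z| := abs_pos.mpr hz.ne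
  have h1 : (Real.sqrt (2 * Real.pi))⁻¹ ≤ 1 := by
    apply inv_le_one_of_one_le₀
    rw [Real.one_le_sqrt]
    nlinarith [Real.pi_gt_three]
  have h2 : phi z ≤ Real.exp (-z ^ 2 / 2) := by
    unfold phi
    exact mul_le_of_le_one_left (Real.exp_pos _).le h1
  have h3 : (z ^ 2 / 2) ^ 2 / 2 ≤ Real.exp (z ^ 2 / 2) := by
    have := Real.quadratic_le_exp_of_nonneg (x := z ^ 2 / 2) (by positivity)
    nlinarith [sq_nonneg z]
  have h4 : Real.exp (-z ^ 2 / 2) * Real.exp (z ^ 2 / 2) = 1 := by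
    rw [← Real.exp_add]; simp; ring
  have h5 : |z| ^ 4 = z ^ 4 := by
    rw [← abs_pow]; exact abs_of_nonneg (by positivity)
  rw [le_div_iff₀ h0]
  calc |z| ^ 3 * phi z * |z| = z ^ 4 * phi z := by rw [← h5]; ring
    _ ≤ z ^ 4 * Real.exp (-z ^ 2 / 2) := by gcongr
    _ = 8 * (Real.exp (-z ^ 2 / 2) * ((z ^ 2 / 2) ^ 2 / 2)) := by ring
    _ ≤ 8 * (Real.exp (-z ^ 2 / 2) * Real.exp (z ^ 2 / 2)) := by gcongr
    _ = 8 := by rw [h4]; norm_num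

theorem sup_dG2phi_tendsto_zero
    (ρ : ℝ) (hρ : ρ ∈ Set.Ioo (0:ℝ) 1) (α : ℝ) (hα : α ∈ Set.Ioo (0:ℝ) 1)
    (αseq : ℕ → ℝ) (hαseq : ∀ n, αseq n ∈ Set.Ioo (0:ℝ) 1)
    (hlim : Tendsto (fun n : ℕ => (n : ℝ) * αseq n) atTop (nhds α))
    (c : ℕ → ℝ) (hc : ∀ n, Phi (-(c n)) = αseq n)
    (z₀ : ℕ → ℝ) (hz₀ : ∀ n : ℕ, 2 ≤ n → Phi (-(dd ρ (c n) (z₀ n))) = 1 / n) :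
    Tendsto (fun n : ℕ =>
        sSup ((fun z : ℝ => dd ρ (c n) z * (G ρ (c n) z) ^ 2 * phi z) '' Set.Iic (z₀ n)))
      atTop (nhds 0) := by
  obtain ⟨hρ0, hρ1⟩ := hρ
  have hev : ∀ᶠ n : ℕ in atTop, 2 ≤ n ∧ αseq n < 1 / n := by
    filter_upwards [eventually_ge_atTop 2, hlim.eventually_lt_const hα.2] with n hn h
    refine ⟨hn, ?_⟩
    have : (0:ℝ) < n := by exact_mod_cast (by omega : 0 < n)
    rw [lt_div_iff₀ this, mul_comm]; exact h
  have hctop : Tendsto c atTop atTop := by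
    rw [tendsto_atTop]
    intro M
    have hM := aux_Phi_pos (-M)
    filter_upwards [hev, (tendsto_one_div_atTop_nhds_zero_nat (𝕜 := ℝ)).eventually_lt_const hM]
      with n h1 h2
    by_contra hlt
    have := aux_Phi_mono (show -M ≤ -(c n) by linarith)
    rw [hc] at this
    linarith [h1.2]
  set s := Real.sqrt ρ with hs
  set t := Real.sqrt (1 - ρ) with ht
  have hs0 : 0 < s := Real.sqrt_pos.mpr hρ0
  have ht0 : 0 < t := Real.sqrt_pos.mpr (by linarith)
  have ht1 : t < 1 := by
    rw [ht, Real.sqrt_lt' one_pos]; linarith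
  set δ := (1 - t) / s with hδ
  have hδ0 : 0 < δ := div_pos (by linarith) hs0
  set u := 2 * (1 - ρ) ^ ((3 : ℝ) / 2) with hu
  have hu0 : 0 < u := by
    have := Real.rpow_pos_of_pos (show 0 < 1 - ρ by linarith) ((3 : ℝ) / 2)
    positivity
  set K1 := (1 / δ + s) / t with hK1
  set K2 := (1 / δ + 1 / s) / u with hK2
  have hK10 : 0 < K1 := by positivity
  have hK20 : 0 < K2 := by positivity
  have hlim0 : Tendsto (fun n => (K1 * K2 ^ 2 * 8 / δ) / c n) atTop (nhds 0) :=
    Tendsto.const_div_atTop hctop _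
  refine squeeze_zero_norm' ?_ hlim0
  filter_upwards [hev, hctop.eventually_gt_atTop 0] with n h1 hcn
  have hdc : dd ρ (c n) (z₀ n) < c n := by
    by_contra hle
    have := aux_Phi_mono (show -(dd ρ (c n) (z₀ n)) ≤ -(c n) by linarith)
    rw [hc, hz₀ n h1.1] at this
    linarith [h1.2]
  have hz : z₀ n ≤ -(δ * c n) := by
    unfold dd at hdc
    rw [div_lt_iff₀ ht0] at hdc
    have : δ * s = 1 - t := by rw [hδ]; field_simp
    have h3 : s * z₀ n ≤ s * (-(δ * c n)) := by
      have : s * (-(δ * c n)) = - ((1 - t) * c n) := by rw [← this]; ring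
      rw [this]; linarith
    exact le_of_mul_le_mul_left h3 hs0
  have key : ∀ z ≤ z₀ n, |dd ρ (c n) z * (G ρ (c n) z) ^ 2 * phi z|
      ≤ (K1 * K2 ^ 2 * 8 / δ) / c n := by
    intro z hzz
    have hdcp : 0 < δ * c n := by positivity
    have hzneg : z < 0 := by linarith
    have habs : |z| = -z := abs_of_neg hzneg
    have hcz : c n ≤ 1 / δ * |z| := by
      rw [one_div_mul_eq_div, le_div_iff₀ hδ0, habs]; linarith
    have hd : |dd ρ (c n) z| ≤ K1 * |z| := by
      unfold dd
      rw [abs_div, abs_of_pos ht0, hK1, div_mul_eq_mul_div]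
      gcongr
      calc |c n + s * z| ≤ |c n| + |s * z| := abs_add_le _ _
        _ = c n + s * |z| := by rw [abs_mul, abs_of_pos hcn, abs_of_pos hs0]
        _ ≤ _ := by linarith
    have hG : |G ρ (c n) z| ≤ K2 * |z| := by
      unfold G
      rw [abs_div, ← hu, abs_of_pos hu0, hK2, div_mul_eq_mul_div]
      gcongr
      calc |c n + z / s| ≤ |c n| + |z / s| := abs_add_le _ _
        _ = c n + 1 / s * |z| := by rw [abs_div, abs_of_pos hcn, abs_of_pos hs0]; ring
        _ ≤ _ := by linarith
    have hp := aux_phi_pos z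
    rw [abs_mul, abs_mul, abs_pow, abs_of_pos hp]
    calc |dd ρ (c n) z| * |G ρ (c n) z| ^ 2 * phi z
        ≤ (K1 * |z|) * (K2 * |z|) ^ 2 * phi z := by gcongr
      _ = K1 * K2 ^ 2 * (|z| ^ 3 * phi z) := by ring
      _ ≤ K1 * K2 ^ 2 * (8 / |z|) := by gcongr; exact aux_phi_bound z hzneg
      _ ≤ K1 * K2 ^ 2 * (8 / (δ * c n)) := by gcongr; linarith
      _ = _ := by field_simp
  have hne : ((fun z : ℝ => dd ρ (c n) z * (G ρ (c n) z) ^ 2 * phi z) '' Set.Iic (z₀ n)).Nonempty :=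
    ⟨_, z₀ n, Set.mem_Iic.mpr le_rfl, rfl⟩
  rw [Real.norm_eq_abs, abs_le]
  constructor
  · refine le_trans (abs_le.mp (key (z₀ n) le_rfl)).1 (le_csSup ?_ ⟨z₀ n, Set.mem_Iic.mpr le_rfl, rfl⟩)
    refine ⟨(K1 * K2 ^ 2 * 8 / δ) / c n, ?_⟩
    rintro _ ⟨z, hz', rfl⟩
    exact (abs_le.mp (key z hz')).2
  · refine csSup_le hne ?_
    rintro _ ⟨z, hz', rfl⟩
    exact (abs_le.mp (key z hz')).2
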